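/- Let Ω ⊆ ℝ^d be a bounded open set and A : Ω → Sym_d(ℝ) measurable, essentially bounded, satisfying a.e. the special Cordes condition with parameter ε ∈ (0,1) and tr A > 0 a.e.; let Γ be an essential upper bound for γ := tr A/‖A‖_F² on Ω. Suppose C_P > 0 is such that the Poincaré inequalities ∫_Ω ‖∇φ‖² ≥ C_P·(∫_Ω φ² + ∫_Ω ‖∇φ‖²) and ∫_Ω ‖Dψ‖_F² ≥ C_P·(∫_Ω ‖ψ‖² + ∫_Ω ‖Dψ‖_F²) hold for all smooth φ : ℝ^d → ℝ and ψ : ℝ^d → ℝ^d with compact support in Ω. Then for all such φ and ψ, ∫_Ω ‖∇φ − ψ‖² + (1/2)∫_Ω ‖Dψ − Dψᵀ‖_F² + ∫_Ω (A : Dψ)² ≥ C·(‖φ‖²_{H¹} + ‖ψ‖²_{H¹}), where C = (C_P/2)·min(1, (1 − √(1−ε))²·C_P / max(Γ², 1)). -/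

import Mathlib

/-!
Write `D = ∫ ‖Dψ‖²`, `Q = ½ ∫ ‖Dψ - Dψᵀ‖²`, `R = ∫ (A : Dψ)²` and `s = √(1 - ε)`.

The Cordes condition says exactly that `‖γ A - I‖² ≤ 1 - ε = s²` for `γ = tr A / ‖A‖²`. Hence
`γ A : Dψ` differs from `div ψ` by a term of size at most `s ‖Dψ‖`, and a weighted Young inequality
gives the pointwise bound `max(Γ², 1) (A : Dψ)² ≥ (1 - s) (div ψ)² - s (1 - s) ‖Dψ‖²`
(`cordes_pointwise`). Two integrations by parts give `∫ Dψ : Dψᵀ = ∫ (div ψ)²`, that is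
`D = ∫ (div ψ)² + Q` (`integral_frobInner_transpose`). Together these yield
`max(Γ², 1) (Q + R) ≥ (1 - s)² D`.

The Poincaré inequality for `ψ` bounds `D` below by `‖ψ‖²` in `H¹`, and
`‖∇φ‖² ≤ 2 ‖∇φ - ψ‖² + 2 ‖ψ‖²` with the Poincaré inequality for `φ` controls the rest
(`coercivity_arith`).
-/

open MeasureTheory Matrix Finset Bornology

noncomputable section

/-- Frobenius inner product of two real `d × d` matrices. -/
def frobInner {d : ℕ} (M N : Matrix (Fin d) (Fin d) ℝ) : ℝ :=
  ∑ i, ∑ j, M i j * N i j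

/-- Squared Frobenius norm of a real `d × d` matrix. -/
def frobSq {d : ℕ} (M : Matrix (Fin d) (Fin d) ℝ) : ℝ := frobInner M M

/-- Squared Euclidean norm of a vector in `ℝ^d`. -/
def vecSq {d : ℕ} (v : Fin d → ℝ) : ℝ := ∑ i, v i ^ 2

/-- Jacobian matrix of a vector field `ψ : ℝ^d → ℝ^d`, `(jac ψ x) i j = ∂_j ψ_i (x)`. -/
def jac {d : ℕ} (ψ : (Fin d → ℝ) → (Fin d → ℝ)) (x : Fin d → ℝ) :
    Matrix (Fin d) (Fin d) ℝ :=
  Matrix.of fun i j => fderiv ℝ ψ x (Pi.single j 1) i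

/-- Gradient of a scalar field `φ : ℝ^d → ℝ`. -/
def grad' {d : ℕ} (φ : (Fin d → ℝ) → ℝ) (x : Fin d → ℝ) : Fin d → ℝ :=
  fun i => fderiv ℝ φ x (Pi.single i 1)

/-- Divergence of a vector field `ψ : ℝ^d → ℝ^d`. -/
def divg {d : ℕ} (ψ : (Fin d → ℝ) → (Fin d → ℝ)) (x : Fin d → ℝ) : ℝ :=
  ∑ i, jac ψ x i i

/-- Hessian matrix of a scalar field `u : ℝ^d → ℝ`. -/
def hess {d : ℕ} (u : (Fin d → ℝ) → ℝ) (x : Fin d → ℝ) : Matrix (Fin d) (Fin d) ℝ :=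
  jac (grad' u) x

lemma frobInner_sq_le {d : ℕ} (M N : Matrix (Fin d) (Fin d) ℝ) :
    frobInner M N ^ 2 ≤ frobSq M * frobSq N := by
  have h := Finset.sum_mul_sq_le_sq_mul_sq (Finset.univ : Finset (Fin d × Fin d))
    (fun p => M p.1 p.2) (fun p => N p.1 p.2)
  simp only [Fintype.sum_prod_type] at h
  simpa only [frobSq, frobInner, ← pow_two] using h

lemma frobSq_nonneg {d : ℕ} (M : Matrix (Fin d) (Fin d) ℝ) : 0 ≤ frobSq M := by
  simp only [frobSq, frobInner]
  exact Finset.sum_nonneg fun _ _ => Finset.sum_nonneg fun _ _ => mul_self_nonneg _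

lemma vecSq_nonneg {d : ℕ} (v : Fin d → ℝ) : 0 ≤ vecSq v :=
  Finset.sum_nonneg fun _ _ => sq_nonneg _

lemma frobInner_one {d : ℕ} (M : Matrix (Fin d) (Fin d) ℝ) :
    frobInner (1 : Matrix (Fin d) (Fin d) ℝ) M = M.trace := by
  simp [frobInner, Matrix.one_apply, Matrix.trace]

lemma frobInner_comm {d : ℕ} (M N : Matrix (Fin d) (Fin d) ℝ) :
    frobInner M N = frobInner N M := by
  simp only [frobInner, mul_comm]

lemma frobInner_smul_sub {d : ℕ} (c : ℝ) (M N P : Matrix (Fin d) (Fin d) ℝ) :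
    frobInner (c • M - N) P = c * frobInner M P - frobInner N P := by
  simp only [frobInner, Matrix.sub_apply, Matrix.smul_apply, smul_eq_mul, Finset.mul_sum,
    ← Finset.sum_sub_distrib]
  refine Finset.sum_congr rfl fun i _ => Finset.sum_congr rfl fun j _ => by ring

lemma frobSq_sub_transpose {d : ℕ} (M : Matrix (Fin d) (Fin d) ℝ) :
    frobSq (M - Mᵀ) = 2 * frobSq M - 2 * frobInner M Mᵀ := by
  have h1 : frobSq (M - Mᵀ) = frobSq M - 2 * frobInner M Mᵀ + frobSq Mᵀ := by
    simp only [frobSq, frobInner, Matrix.sub_apply, Finset.mul_sum,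
      ← Finset.sum_sub_distrib, ← Finset.sum_add_distrib]
    refine Finset.sum_congr rfl fun i _ => Finset.sum_congr rfl fun j _ => by ring
  have h2 : frobSq Mᵀ = frobSq M := by
    simp only [frobSq, frobInner, Matrix.transpose_apply]
    exact Finset.sum_comm
  rw [h1, h2]; ring

/-- The Cordes condition in the form in which it is used: with `γ = tr A / ‖A‖²`,
`‖γ A - I‖² = d - (tr A)² / ‖A‖² ≤ 1 - ε`. -/
lemma frobSq_cordes {d : ℕ} (A : Matrix (Fin d) (Fin d) ℝ) {ε : ℝ} (hε : 0 < ε)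
    (htr : 0 < A.trace) (hc : frobSq A / A.trace ^ 2 ≤ 1 / ((d : ℝ) - 1 + ε)) :
    0 < frobSq A ∧ frobSq ((A.trace / frobSq A) • A - 1) ≤ 1 - ε := by
  have hd : 1 ≤ (d : ℝ) := by
    rcases Nat.eq_zero_or_pos d with rfl | h
    · simp [Matrix.trace] at htr
    · exact_mod_cast h
  have hA : 0 < frobSq A := by
    have h := frobInner_sq_le (1 : Matrix (Fin d) (Fin d) ℝ) A
    rw [frobInner_one] at h
    by_contra hn
    have h0 : frobSq A = 0 := le_antisymm (not_lt.mp hn) (frobSq_nonneg A)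
    rw [h0, mul_zero] at h
    nlinarith
  refine ⟨hA, ?_⟩
  have hd' : 0 < (d : ℝ) - 1 + ε := by linarith
  rw [div_le_div_iff₀ (by positivity) hd'] at hc
  have hone : frobInner (1 : Matrix (Fin d) (Fin d) ℝ) 1 = d := by
    rw [frobInner_one]; simp
  have hexp : frobSq ((A.trace / frobSq A) • A - 1) = d - A.trace ^ 2 / frobSq A := by
    rw [frobSq, frobInner_smul_sub, frobInner_comm A, frobInner_comm 1, frobInner_smul_sub,
      frobInner_smul_sub, frobInner_one, hone, frobInner_comm A 1, frobInner_one]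
    change _ * (_ * frobSq A - _) - _ = _
    field_simp
    ring
  have : (d : ℝ) - 1 + ε ≤ A.trace ^ 2 / frobSq A := by
    rw [le_div_iff₀ hA]; linarith
  rw [hexp]; linarith

lemma cordes_pointwise {d : ℕ} (A M : Matrix (Fin d) (Fin d) ℝ) {ε Γ : ℝ}
    (hε : ε ∈ Set.Ioo (0 : ℝ) 1) (htr : 0 < A.trace)
    (hc : frobSq A / A.trace ^ 2 ≤ 1 / ((d : ℝ) - 1 + ε))
    (hΓ : A.trace / frobSq A ≤ Γ) :
    (1 - √(1 - ε)) * M.trace ^ 2 - √(1 - ε) * (1 - √(1 - ε)) * frobSq M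
      ≤ max (Γ ^ 2) 1 * frobInner A M ^ 2 := by
  obtain ⟨hA, hγ⟩ := frobSq_cordes A hε.1 htr hc
  set γ := A.trace / frobSq A with hγdef
  have hγ0 : 0 < γ := by positivity
  set s := √(1 - ε) with hs
  have hs0 : 0 < s := Real.sqrt_pos.mpr (by linarith [hε.2])
  have hs2 : s ^ 2 = 1 - ε := Real.sq_sqrt (by linarith [hε.2])
  have hs1 : s < 1 := by nlinarith [hε.1]
  have hr := frobInner_sq_le (γ • A - 1) M
  rw [frobInner_smul_sub, frobInner_one] at hr
  set a := frobInner A M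
  set t := M.trace
  have hr' : (γ * a - t) ^ 2 ≤ s ^ 2 * frobSq M :=
    hr.trans (by rw [hs2]; exact mul_le_mul_of_nonneg_right hγ (frobSq_nonneg M))
  -- Young's inequality `(t + r)² ≥ (1 - s) t² - (1/s - 1) r²` for `r = γ a - t`, multiplied by `s`
  have hyoung : s * ((1 - s) * t ^ 2) - (1 - s) * (γ * a - t) ^ 2 ≤ s * (γ * a) ^ 2 := by
    nlinarith [sq_nonneg (s * t + (γ * a - t))]
  have h1 : s * ((1 - s) * t ^ 2 - s * (1 - s) * frobSq M) ≤ s * (γ * a) ^ 2 := by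
    nlinarith [mul_le_mul_of_nonneg_left hr' (by linarith : 0 ≤ 1 - s)]
  have h2 := le_of_mul_le_mul_left h1 hs0
  have h3 : γ ^ 2 ≤ max (Γ ^ 2) 1 :=
    (pow_le_pow_left₀ hγ0.le hΓ 2).trans (le_max_left _ _)
  nlinarith [mul_le_mul_of_nonneg_right h3 (sq_nonneg a)]

/-- Both sides equal `-∫ f ∂_v ∂_w g`, by integration by parts and the symmetry of second
derivatives. Compact support of `f` alone removes the boundary terms. -/
lemma integral_fderiv_mul_swap {d : ℕ} {f g : (Fin d → ℝ) → ℝ}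
    (hf : ContDiff ℝ (⊤ : ℕ∞) f) (hfs : HasCompactSupport f)
    (hg : ContDiff ℝ (⊤ : ℕ∞) g) (v w : Fin d → ℝ) :
    ∫ x, fderiv ℝ f x v * fderiv ℝ g x w = ∫ x, fderiv ℝ f x w * fderiv ℝ g x v := by
  have hD : ∀ {h : (Fin d → ℝ) → ℝ}, ContDiff ℝ (⊤ : ℕ∞) h → ∀ u,
      ContDiff ℝ (⊤ : ℕ∞) fun x => fderiv ℝ h x u := fun hh u =>
    (hh.fderiv_right (m := (⊤ : ℕ∞)) (by simp)).clm_apply contDiff_const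
  have key : ∀ u u', ∫ x, fderiv ℝ f x u * fderiv ℝ g x u'
      = - ∫ x, f x * fderiv ℝ (fun y => fderiv ℝ g y u') x u := by
    intro u u'
    rw [eq_neg_iff_add_eq_zero, add_comm, ← eq_neg_iff_add_eq_zero]
    apply integral_mul_fderiv_eq_neg_fderiv_mul_of_integrable
    · exact ((hD hf u).continuous.mul (hD hg u').continuous).integrable_of_hasCompactSupport
        ((hfs.fderiv_apply ℝ u).mul_right)
    · exact (hf.continuous.mul (hD (hD hg u') u).continuous).integrable_of_hasCompactSupport
        hfs.mul_right
    · exact (hf.continuous.mul (hD hg u').continuous).integrable_of_hasCompactSupport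
        hfs.mul_right
    · exact fun x _ => hf.differentiable (by simp) x
    · exact fun x _ => (hD hg u').differentiable (by simp) x
  rw [key v w, key w v]
  congr 2
  ext x
  have hsymm : IsSymmSndFDerivAt ℝ g x := hg.contDiffAt.isSymmSndFDerivAt (by
    rw [minSmoothness_of_isRCLikeNormedField]
    exact WithTop.coe_le_coe.mpr (le_top : (2 : ℕ∞) ≤ ⊤))
  have hd : DifferentiableAt ℝ (fderiv ℝ g) x :=
    (hg.fderiv_right (m := (⊤ : ℕ∞)) (by simp)).differentiable (by simp) x
  have e : ∀ u u', fderiv ℝ (fun y => fderiv ℝ g y u') x u = fderiv ℝ (fderiv ℝ g) x u u' := by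
    intro u u'
    rw [fderiv_clm_apply hd (differentiableAt_const _)]
    simp
  rw [e, e, hsymm.eq]

lemma continuous_jac {d : ℕ} {ψ : (Fin d → ℝ) → (Fin d → ℝ)}
    (hψ : ContDiff ℝ (⊤ : ℕ∞) ψ) (i j : Fin d) : Continuous fun x => jac ψ x i j := by
  have h : Continuous (fderiv ℝ ψ) := hψ.continuous_fderiv (by simp)
  exact (continuous_apply i).comp (h.clm_apply continuous_const)

lemma jac_eq_zero {d : ℕ} {ψ : (Fin d → ℝ) → (Fin d → ℝ)} {x : Fin d → ℝ}
    (hx : x ∉ tsupport ψ) : jac ψ x = 0 := by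
  ext i j
  simp [jac, fderiv_of_notMem_tsupport ℝ hx]

lemma grad'_eq_zero {d : ℕ} {φ : (Fin d → ℝ) → ℝ} {x : Fin d → ℝ}
    (hx : x ∉ tsupport φ) : grad' φ x = 0 := by
  ext i
  simp [grad', fderiv_of_notMem_tsupport ℝ hx]

lemma continuous_grad' {d : ℕ} {φ : (Fin d → ℝ) → ℝ}
    (hφ : ContDiff ℝ (⊤ : ℕ∞) φ) (i : Fin d) : Continuous fun x => grad' φ x i := by
  have h : Continuous (fderiv ℝ φ) := hφ.continuous_fderiv (by simp)
  exact h.clm_apply continuous_const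

lemma integrable_of_zero_off {d : ℕ} {F : (Fin d → ℝ) → ℝ} {S : Set (Fin d → ℝ)}
    (hF : Continuous F) (hS : IsCompact S) (h0 : ∀ x, x ∉ S → F x = 0) : Integrable F :=
  hF.integrable_of_hasCompactSupport (HasCompactSupport.intro hS h0)

/-- `∫ Dψ : Dψᵀ = ∫ (div ψ)²` for smooth fields with compact support in `Ω`. -/
lemma integral_frobInner_transpose {d : ℕ} {Ω : Set (Fin d → ℝ)}
    {ψ : (Fin d → ℝ) → (Fin d → ℝ)} (hψ : ContDiff ℝ (⊤ : ℕ∞) ψ)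
    (hψsupp : HasCompactSupport ψ) (hψsub : tsupport ψ ⊆ Ω) :
    ∫ x in Ω, frobInner (jac ψ x) (jac ψ x)ᵀ = ∫ x in Ω, (jac ψ x).trace ^ 2 := by
  rw [setIntegral_eq_integral_of_forall_compl_eq_zero,
    setIntegral_eq_integral_of_forall_compl_eq_zero]
  · have hint : ∀ i j k l : Fin d, Integrable fun x => jac ψ x i j * jac ψ x k l := fun i j k l =>
      integrable_of_zero_off ((continuous_jac hψ i j).mul (continuous_jac hψ k l)) hψsupp
        fun x hx => by simp [jac_eq_zero hx]
    have hjac : ∀ i j x, jac ψ x i j = fderiv ℝ (fun y => ψ y i) x (Pi.single j 1) := by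
      intro i j x
      rw [fderiv_apply (hψ.differentiable (by simp) x) i]
      rfl
    have hcomp : ∀ i, ContDiff ℝ (⊤ : ℕ∞) fun y => ψ y i := fun i => contDiff_pi.mp hψ i
    have hcs : ∀ i, HasCompactSupport fun y => ψ y i := fun i =>
      hψsupp.comp_left (g := fun v : Fin d → ℝ => v i) rfl
    simp only [frobInner, Matrix.transpose_apply, Matrix.trace, Matrix.diag_apply, pow_two,
      Finset.sum_mul_sum]
    rw [integral_finsetSum _ fun i _ => integrable_finsetSum _ fun j _ => hint i j j i,
      integral_finsetSum _ fun i _ => integrable_finsetSum _ fun j _ => hint i i j j]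
    refine Finset.sum_congr rfl fun i _ => ?_
    rw [integral_finsetSum _ fun j _ => hint i j j i, integral_finsetSum _ fun j _ => hint i i j j]
    refine Finset.sum_congr rfl fun j _ => ?_
    simp only [hjac]
    exact integral_fderiv_mul_swap (hcomp i) (hcs i) (hcomp j) _ _
  · intro x hx
    simp [jac_eq_zero fun h => hx (hψsub h)]
  · intro x hx
    simp [jac_eq_zero fun h => hx (hψsub h), frobInner]

/-- The final bookkeeping, in terms of the integrals `P = ∫ ‖∇φ - ψ‖²`, `f = ∫ φ²`,
`G = ∫ ‖∇φ‖²`, `p = ∫ ‖ψ‖²`, and `D = ∫ ‖Dψ‖²`,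
`Q = ½ ∫ ‖Dψ - Dψᵀ‖²`, `R = ∫ (A : Dψ)²`; `k = (1 - s)²` and `m = max(Γ², 1)`. -/
lemma coercivity_arith {P Q R D G f p k m CP : ℝ} (hk : 0 ≤ k) (hm : 1 ≤ m) (hCP : 0 < CP)
    (hP : 0 ≤ P) (hD : 0 ≤ D) (hp : 0 ≤ p)
    (hmain : k * D ≤ m * (Q + R)) (hG : G ≤ 2 * P + 2 * p)
    (hφ : CP * (f + G) ≤ G) (hψ : CP * (p + D) ≤ D) :
    CP / 2 * min 1 (k * CP / m) * ((f + G) + (p + D)) ≤ P + Q + R := by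
  set μ := min 1 (k * CP / m) with hμ
  have hm0 : 0 < m := by linarith
  have hμ0 : 0 ≤ μ := le_min zero_le_one (by positivity)
  have hμ1 : μ ≤ 1 := min_le_left _ _
  have hμ2 : μ ≤ k * CP / m := min_le_right _ _
  have h1 : k / m * D ≤ Q + R := by
    rw [div_mul_eq_mul_div, div_le_iff₀ hm0]; linarith
  have h2 : μ * (p + D) ≤ Q + R := by
    calc μ * (p + D) ≤ k * CP / m * (p + D) := mul_le_mul_of_nonneg_right hμ2 (by linarith)
      _ = k / m * (CP * (p + D)) := by ring
      _ ≤ k / m * D := mul_le_mul_of_nonneg_left hψ (by positivity)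
      _ ≤ Q + R := h1
  have h3 : μ * P ≤ P := mul_le_of_le_one_left hP hμ1
  have h4 : μ * (CP * (f + G)) ≤ μ * (2 * P + 2 * p) :=
    mul_le_mul_of_nonneg_left (hφ.trans hG) hμ0
  have h5 : μ * (CP * (p + D)) ≤ μ * D := mul_le_mul_of_nonneg_left hψ hμ0
  have h6 : 0 ≤ μ * D := mul_nonneg hμ0 hD
  nlinarith

/-- **coercivity of `â_θ`, case `λ = 0`, `b = 0`, `c = 0`.**
Under the a.e. special Cordes condition on `A` with parameter `ε ∈ (0,1)` (with
`tr A > 0` a.e.), with `Γ` an essential upper bound for `γ := tr A/‖A‖_F²`, and with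
Poincaré constant `C_P` for compactly supported fields,
`∫ ‖∇φ − ψ‖² + (1/2)∫ ‖Dψ − Dψᵀ‖_F² + ∫ (A : Dψ)² ≥ C·(‖φ‖²_{H¹} + ‖ψ‖²_{H¹})` where
`C = (C_P/2)·min(1, (1 − √(1−ε))²·C_P/max(Γ², 1))`. -/
theorem coercivity_a_hat_special_cordes
    {d : ℕ} (Ω : Set (Fin d → ℝ)) (hΩ : IsOpen Ω) (hbdΩ : IsBounded Ω)
    (A : (Fin d → ℝ) → Matrix (Fin d) (Fin d) ℝ)
    (hAmeas : ∀ i j, Measurable fun x => A x i j)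
    (hAsymm : ∀ x, (A x).IsSymm)
    (K : ℝ) (hAbdd : ∀ᵐ x ∂(volume.restrict Ω), Real.sqrt (frobSq (A x)) ≤ K)
    (ε : ℝ) (hε : ε ∈ Set.Ioo (0 : ℝ) 1)
    (hcordes : ∀ᵐ x ∂(volume.restrict Ω),
      0 < Matrix.trace (A x) ∧
        frobSq (A x) / (Matrix.trace (A x)) ^ 2 ≤ 1 / ((d : ℝ) - 1 + ε))
    (Γ : ℝ) (hΓ : ∀ᵐ x ∂(volume.restrict Ω), Matrix.trace (A x) / frobSq (A x) ≤ Γ)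
    (CP : ℝ) (hCP : 0 < CP)
    (hPoincareScal : ∀ φ : (Fin d → ℝ) → ℝ, ContDiff ℝ (⊤ : ℕ∞) φ →
      HasCompactSupport φ → tsupport φ ⊆ Ω →
      (∫ x in Ω, vecSq (grad' φ x))
        ≥ CP * ((∫ x in Ω, (φ x) ^ 2) + ∫ x in Ω, vecSq (grad' φ x)))
    (hPoincareVec : ∀ ψ : (Fin d → ℝ) → (Fin d → ℝ), ContDiff ℝ (⊤ : ℕ∞) ψ →
      HasCompactSupport ψ → tsupport ψ ⊆ Ω →
      (∫ x in Ω, frobSq (jac ψ x))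
        ≥ CP * ((∫ x in Ω, vecSq (ψ x)) + ∫ x in Ω, frobSq (jac ψ x)))
    (φ : (Fin d → ℝ) → ℝ) (hφ : ContDiff ℝ (⊤ : ℕ∞) φ)
    (hφsupp : HasCompactSupport φ) (hφsub : tsupport φ ⊆ Ω)
    (ψ : (Fin d → ℝ) → (Fin d → ℝ)) (hψ : ContDiff ℝ (⊤ : ℕ∞) ψ)
    (hψsupp : HasCompactSupport ψ) (hψsub : tsupport ψ ⊆ Ω) :
    (∫ x in Ω, vecSq fun i => grad' φ x i - ψ x i)
        + (1 / 2 : ℝ) * (∫ x in Ω, frobSq (jac ψ x - (jac ψ x)ᵀ))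
        + (∫ x in Ω, (frobInner (A x) (jac ψ x)) ^ 2)
      ≥ (CP / 2) * min 1 ((1 - Real.sqrt (1 - ε)) ^ 2 * CP / max (Γ ^ 2) 1)
        * (((∫ x in Ω, (φ x) ^ 2) + ∫ x in Ω, vecSq (grad' φ x))
            + ((∫ x in Ω, vecSq (ψ x)) + ∫ x in Ω, frobSq (jac ψ x))) := by
  have hj := continuous_jac hψ
  have hgr := continuous_grad' hφ
  have hψi : ∀ i, Continuous fun x => ψ x i := fun i => (continuous_apply i).comp hψ.continuous
  have hφ0 : ∀ x, x ∉ tsupport φ → ∀ i, grad' φ x i = 0 := fun x hx i => by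
    rw [grad'_eq_zero hx]; rfl
  have hψ0 : ∀ x, x ∉ tsupport ψ → ∀ i, ψ x i = 0 := fun x hx i => by
    rw [image_eq_zero_of_notMem_tsupport hx]; rfl
  have hj0 : ∀ x, x ∉ tsupport ψ → ∀ i j, jac ψ x i j = 0 := fun x hx i j => by
    rw [jac_eq_zero hx]; rfl
  have iD : IntegrableOn (fun x => frobSq (jac ψ x)) Ω := by
    refine (integrable_of_zero_off ?_ hψsupp fun x hx => ?_).integrableOn
    · simp only [frobSq, frobInner]; fun_prop
    · simp [frobSq, frobInner, hj0 x hx]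
  have iT : IntegrableOn (fun x => frobInner (jac ψ x) (jac ψ x)ᵀ) Ω := by
    refine (integrable_of_zero_off ?_ hψsupp fun x hx => ?_).integrableOn
    · simp only [frobInner, Matrix.transpose_apply]; fun_prop
    · simp [frobInner, hj0 x hx]
  have itr : IntegrableOn (fun x => (jac ψ x).trace ^ 2) Ω := by
    refine (integrable_of_zero_off ?_ hψsupp fun x hx => ?_).integrableOn
    · simp only [Matrix.trace, Matrix.diag_apply]; fun_prop
    · simp [jac_eq_zero hx]
  have iG : IntegrableOn (fun x => vecSq (grad' φ x)) Ω := by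
    refine (integrable_of_zero_off ?_ hφsupp fun x hx => ?_).integrableOn
    · simp only [vecSq]; fun_prop
    · simp [vecSq, hφ0 x hx]
  have ip : IntegrableOn (fun x => vecSq (ψ x)) Ω := by
    refine (integrable_of_zero_off ?_ hψsupp fun x hx => ?_).integrableOn
    · simp only [vecSq]; fun_prop
    · simp [vecSq, hψ0 x hx]
  have iP : IntegrableOn (fun x => vecSq fun i => grad' φ x i - ψ x i) Ω := by
    refine (integrable_of_zero_off ?_ (hφsupp.isCompact.union hψsupp.isCompact)
      fun x hx => ?_).integrableOn
    · simp only [vecSq]; fun_prop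
    · rw [Set.mem_union, not_or] at hx
      simp [vecSq, hφ0 x hx.1, hψ0 x hx.2]
  have iR : IntegrableOn (fun x => frobInner (A x) (jac ψ x) ^ 2) Ω := by
    refine (iD.const_mul (K ^ 2)).mono' ?_ ?_
    · refine Measurable.aestronglyMeasurable (Measurable.pow_const ?_ 2)
      simp only [frobInner]
      exact Finset.measurable_fun_sum _ fun i _ => Finset.measurable_fun_sum _ fun j _ =>
        (hAmeas i j).mul (hj i j).measurable
    · filter_upwards [hAbdd] with x hx
      rw [Real.norm_of_nonneg (sq_nonneg _)]
      refine (frobInner_sq_le _ _).trans (mul_le_mul_of_nonneg_right ?_ (frobSq_nonneg _))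
      rw [← Real.sq_sqrt (frobSq_nonneg (A x))]
      exact pow_le_pow_left₀ (Real.sqrt_nonneg _) hx 2
  have hQ : (1 / 2 : ℝ) * (∫ x in Ω, frobSq (jac ψ x - (jac ψ x)ᵀ))
      = (∫ x in Ω, frobSq (jac ψ x)) - ∫ x in Ω, (jac ψ x).trace ^ 2 := by
    simp only [frobSq_sub_transpose]
    rw [integral_sub (iD.const_mul 2) (iT.const_mul 2), integral_const_mul, integral_const_mul,
      integral_frobInner_transpose hψ hψsupp hψsub]
    ring
  have hQ0 : 0 ≤ (1 / 2 : ℝ) * (∫ x in Ω, frobSq (jac ψ x - (jac ψ x)ᵀ)) :=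
    mul_nonneg (by norm_num) (integral_nonneg fun x => frobSq_nonneg _)
  have hR : (1 - √(1 - ε)) * (∫ x in Ω, (jac ψ x).trace ^ 2)
      - √(1 - ε) * (1 - √(1 - ε)) * (∫ x in Ω, frobSq (jac ψ x))
      ≤ max (Γ ^ 2) 1 * ∫ x in Ω, frobInner (A x) (jac ψ x) ^ 2 := by
    rw [← integral_const_mul, ← integral_const_mul, ← integral_const_mul,
      ← integral_sub (itr.const_mul _) (iD.const_mul _)]
    refine integral_mono_ae ((itr.const_mul _).sub (iD.const_mul _)) (iR.const_mul _) ?_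
    filter_upwards [hcordes, hΓ] with x hx hx'
    exact cordes_pointwise (A x) (jac ψ x) hε hx.1 hx.2 hx'
  have hG : (∫ x in Ω, vecSq (grad' φ x))
      ≤ 2 * (∫ x in Ω, vecSq fun i => grad' φ x i - ψ x i) + 2 * ∫ x in Ω, vecSq (ψ x) := by
    rw [← integral_const_mul, ← integral_const_mul,
      ← integral_add (iP.const_mul _) (ip.const_mul _)]
    refine integral_mono iG ((iP.const_mul _).add (ip.const_mul _)) fun x => ?_
    simp only [vecSq, Finset.mul_sum, ← Finset.sum_add_distrib]
    refine Finset.sum_le_sum fun i _ => ?_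
    nlinarith [sq_nonneg (grad' φ x i - 2 * ψ x i)]
  have hm : 1 ≤ max (Γ ^ 2) 1 := le_max_right _ _
  have hs0 : 0 ≤ √(1 - ε) := Real.sqrt_nonneg _
  refine coercivity_arith (sq_nonneg _) hm hCP (integral_nonneg fun x => vecSq_nonneg _)
    (integral_nonneg fun x => frobSq_nonneg _) (integral_nonneg fun x => vecSq_nonneg _) ?_ hG
    (hPoincareScal φ hφ hφsupp hφsub) (hPoincareVec ψ hψ hψsupp hψsub)
  -- With `T = ∫ (div ψ)² = D - Q`: `(1 - s)² D = (1 - s) T - s (1 - s) D + (1 - s) Q`, and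
  -- `(1 - s) Q ≤ Q ≤ max(Γ², 1) Q`.
  nlinarith [mul_le_mul_of_nonneg_right hm hQ0, mul_nonneg hs0 hQ0]
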